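/- Suppose f, g : ℝ^N → [−∞, ∞] are Borel measurable, g ≥ 0, f is not identically ∞ and g is not identically ∞. Let f_+ := max{f, 0} and m := m_{f_+,g} = (m_{f_+} − m_g)/2. Then f⊻g ≥ 0 and for every Young function φ: ‖(f⊻g)⁻¹‖_φ ≤ 2^N ( ‖((f_+)̌ − m)⁻¹‖_φ + ‖(ǧ + m)⁻¹‖_φ ). -/

import Mathlib

open MeasureTheory Filter Set
open scoped ENNReal NNReal Pointwise

noncomputable section

/-- `ℝ^N` with the Euclidean structure and Lebesgue measure. -/
abbrev ES (N : ℕ) := EuclideanSpace ℝ (Fin N)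

variable {N : ℕ}

/-- The operation `(f ⊼ g)(x) = sup_y min (f (x - y)) (g y)` for extended-real valued
functions. -/
def supMinE (f g : ES N → EReal) (x : ES N) : EReal := ⨆ y, min (f (x - y)) (g y)

/-- The operation `(f ⊻ g)(x) = inf_y max (f (x - y)) (g y)` for extended-real valued
functions. -/
def infMaxE (f g : ES N → EReal) (x : ES N) : EReal := ⨅ y, max (f (x - y)) (g y)

/-- The infimal convolution `(f □ g)(x) = inf_y (f (x - y) + g y)`. -/
def infConvE (f g : ES N → EReal) (x : ES N) : EReal := ⨅ y, (f (x - y) + g y)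

/-- The operation `(f ⊼ g)(x) = sup_y min (f (x - y)) (g y)` for `[0,∞]`-valued functions. -/
def supMin (f g : ES N → ℝ≥0∞) (x : ES N) : ℝ≥0∞ := ⨆ y, min (f (x - y)) (g y)

/-- A Young function: a nonconstant, nondecreasing, convex, left-continuous
`φ : [0,∞] → [0,∞]` with `φ 0 = 0`. -/
structure IsYoungFunction (φ : ℝ≥0∞ → ℝ≥0∞) : Prop where
  nonconstant : ∃ x y, φ x ≠ φ y
  map_zero : φ 0 = 0
  mono : Monotone φ
  convex : ∀ ⦃a b x y : ℝ≥0∞⦄, a + b = 1 → φ (a * x + b * y) ≤ a * φ x + b * φ y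
  left_continuous : ∀ x, ContinuousWithinAt φ (Set.Iio x) x

/-- The Luxemburg norm `‖h‖_φ = inf {r > 0 | ∫ φ (r⁻¹ |h|) ≤ 1}` (`= ∞` if no such `r`),
for a nonnegative function `h`. -/
def luxNorm (φ : ℝ≥0∞ → ℝ≥0∞) (h : ES N → ℝ≥0∞) : ℝ≥0∞ :=
  sInf {r : ℝ≥0∞ | 0 < r ∧ ∫⁻ x, φ (r⁻¹ * h x) ≤ 1}

/-- The nonnegative part of an extended real, as an element of `[0,∞]`. -/
def toENN (a : EReal) : ℝ≥0∞ := if a = ⊤ then ⊤ else ENNReal.ofReal a.toReal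

/-- The reciprocal `1/a ∈ [0,∞]` of an extended real (intended for `a ≥ 0`), with the
conventions `1/0 = ∞` and `1/∞ = 0`. -/
def eInv (a : EReal) : ℝ≥0∞ := (toENN a)⁻¹

/-- The enclosing radius of a set `X ⊆ ℝ^N`: the infimum of the radii of closed balls
containing `X` (`0` for `X = ∅`, `∞` if `X` is unbounded). -/
def encRadius (X : Set (ES N)) : ℝ≥0∞ := sInf {r : ℝ≥0∞ | ∃ c : ES N, ∀ x ∈ X, edist x c ≤ r}

/-- The transform `f̂(x) = γ_f^+(|x|)` where `γ_f^+(t) = inf {ξ | ρ_f^+(ξ) ≤ t}` and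
`ρ_f^+(ξ)` is the enclosing radius of the upper level set `{f > ξ}`. -/
def hatE (f : ES N → EReal) (x : ES N) : EReal :=
  sInf {ξ : EReal | encRadius {y | ξ < f y} ≤ (‖x‖₊ : ℝ≥0∞)}

/-- The lower transform `f̌ = -((-f)^)`. -/
def checkE (f : ES N → EReal) (x : ES N) : EReal := - hatE (fun y => - f y) x

/-- The transform `f̂` for `[0,∞]`-valued functions. -/
def hatT (f : ES N → ℝ≥0∞) (x : ES N) : ℝ≥0∞ :=
  sInf {ξ : ℝ≥0∞ | encRadius {y | ξ < f y} ≤ (‖x‖₊ : ℝ≥0∞)}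

/-- The lower transform `f̌(x) = γ_f^-(|x|)`, `γ_f^-(t) = sup {ξ | ρ({f < ξ}) ≤ t}`,
for `[0,∞]`-valued functions. -/
def checkT (f : ES N → ℝ≥0∞) (x : ES N) : ℝ≥0∞ :=
  sSup {ξ : ℝ≥0∞ | encRadius {y | f y < ξ} ≤ (‖x‖₊ : ℝ≥0∞)}

/-- The `L^p` "norm" (`p ∈ [1,∞]`, essential supremum when `p = ∞`) of a `[0,∞]`-valued
function. -/
def pNorm (p : ℝ≥0∞) (h : ES N → ℝ≥0∞) : ℝ≥0∞ :=
  if p = ∞ then essSup h volume else (∫⁻ x, h x ^ p.toReal) ^ (1 / p.toReal)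

/-- Compactness of enclosing balls: if every finite part of `X` lies in closed balls of all radii
larger than `R`, then `X` lies in a closed ball of radius `R`. -/
lemma exists_subset_closedBall_of_finite {X : Set (ES N)} {R : ℝ}
    (h : ∀ T : Finset (ES N), ↑T ⊆ X → ∀ R' > R, ∃ c, ∀ y ∈ T, dist y c ≤ R') :
    ∃ c, X ⊆ Metric.closedBall c R := by
  classical
  rcases X.eq_empty_or_nonempty with rfl | ⟨y₀, hy₀⟩
  · exact ⟨0, empty_subset _⟩
  let ι := {p : ℝ × ES N // R < p.1 ∧ p.2 ∈ X}
  have key : (Metric.closedBall y₀ (R + 1) ∩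
      ⋂ i : ι, Metric.closedBall i.1.2 i.1.1).Nonempty := by
    refine (isCompact_closedBall y₀ (R + 1)).inter_iInter_nonempty _
      (fun _ => Metric.isClosed_closedBall) fun u => ?_
    have hlb : ∃ R' > R, R' ≤ R + 1 ∧ ∀ i ∈ u, R' ≤ i.1.1 := by
      induction u using Finset.induction_on with
      | empty => exact ⟨R + 1, by simp, le_rfl, by simp⟩
      | insert i u _ ih =>
        obtain ⟨R', h₁, h₂, h₃⟩ := ih
        refine ⟨min R' i.1.1, lt_min h₁ i.2.1, (min_le_left _ _).trans h₂, fun j hj => ?_⟩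
        rcases Finset.mem_insert.1 hj with rfl | hj
        · exact min_le_right _ _
        · exact (min_le_left _ _).trans (h₃ j hj)
    obtain ⟨R', h₁, h₂, h₃⟩ := hlb
    obtain ⟨c, hc⟩ := h (insert y₀ (u.image fun i => i.1.2)) (by
      intro y hy
      simp only [Finset.coe_insert, Finset.coe_image, mem_insert_iff, mem_image,
        Finset.mem_coe] at hy
      rcases hy with rfl | ⟨i, _, rfl⟩
      exacts [hy₀, i.2.2]) R' h₁
    refine ⟨c, ?_, mem_iInter₂.2 fun i hi => ?_⟩
    · rw [Metric.mem_closedBall, dist_comm]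
      exact (hc y₀ (Finset.mem_insert_self _ _)).trans h₂
    · rw [Metric.mem_closedBall, dist_comm]
      exact (hc _ (Finset.mem_insert_of_mem (Finset.mem_image_of_mem _ hi))).trans (h₃ i hi)
  obtain ⟨c, -, hc⟩ := key
  refine ⟨c, fun y hy => Metric.mem_closedBall.2
    (le_of_forall_gt_imp_ge_of_dense fun R' hR' => ?_)⟩
  rw [dist_comm]
  exact mem_iInter.1 hc ⟨(R', y), hR', hy⟩

lemma encRadius_mono {X Y : Set (ES N)} (h : X ⊆ Y) : encRadius X ≤ encRadius Y :=
  sInf_le_sInf fun _ ⟨c, hc⟩ => ⟨c, fun x hx => hc x (h hx)⟩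

lemma exists_dist_le_of_encRadius_lt {X : Set (ES N)} {R : ℝ}
    (h : encRadius X < ENNReal.ofReal R) : ∃ c, ∀ y ∈ X, dist y c ≤ R := by
  obtain ⟨r, ⟨c, hc⟩, hr⟩ := sInf_lt_iff.1 h
  have hR : 0 < R := ENNReal.ofReal_pos.1 (bot_le.trans_lt h)
  refine ⟨c, fun y hy => ?_⟩
  have := (hc y hy).trans hr.le
  rwa [edist_dist, ENNReal.ofReal_le_ofReal_iff hR.le] at this

/-- A finite enclosing radius is attained. -/
lemma exists_subset_closedBall_encRadius {X : Set (ES N)} (h : encRadius X ≠ ∞) :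
    ∃ c, X ⊆ Metric.closedBall c (encRadius X).toReal := by
  refine exists_subset_closedBall_of_finite fun T hT R' hR' => ?_
  obtain ⟨c, hc⟩ := exists_dist_le_of_encRadius_lt
    ((ENNReal.lt_ofReal_iff_toReal_lt h).2 hR')
  exact ⟨c, fun y hy => hc y (hT hy)⟩

/-- The infimum defining `hatE` is attained: `{f > f̂ x}` has enclosing radius at most `|x|`. -/
lemma encRadius_hatE_lt_le (f : ES N → EReal) (x : ES N) :
    encRadius {y | hatE f x < f y} ≤ (‖x‖₊ : ℝ≥0∞) := by
  classical
  have key : ∃ c, {y | hatE f x < f y} ⊆ Metric.closedBall c ‖x‖ := by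
    refine exists_subset_closedBall_of_finite fun T hT R' hR' => ?_
    rcases T.eq_empty_or_nonempty with rfl | hne
    · exact ⟨0, by simp⟩
    obtain ⟨y₁, hy₁, hmin⟩ := T.exists_min_image f hne
    obtain ⟨ξ, hξ, hlt⟩ := sInf_lt_iff.1 (show hatE f x < f y₁ from hT hy₁)
    have hξ' : encRadius {y | ξ < f y} < ENNReal.ofReal R' := by
      refine lt_of_le_of_lt hξ ?_
      rw [← enorm_eq_nnnorm, ← ofReal_norm]
      exact (ENNReal.ofReal_lt_ofReal_iff ((norm_nonneg x).trans_lt hR')).2 hR'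
    obtain ⟨c, hc⟩ := exists_dist_le_of_encRadius_lt hξ'
    exact ⟨c, fun y hy => hc y (hlt.trans_le (hmin y hy))⟩
  obtain ⟨c, hc⟩ := key
  refine sInf_le ⟨c, fun y hy => ?_⟩
  rw [← enorm_eq_nnnorm, ← ofReal_norm, edist_dist]
  exact ENNReal.ofReal_le_ofReal (hc hy)

/-- The sublevel set `{p < p̌ x}` has enclosing radius at most `|x|`. -/
lemma encRadius_lt_checkE_le (p : ES N → EReal) (x : ES N) :
    encRadius {y | p y < checkE p x} ≤ (‖x‖₊ : ℝ≥0∞) := by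
  refine (encRadius_mono fun y hy => ?_).trans (encRadius_hatE_lt_le (fun y => -p y) x)
  exact EReal.lt_neg_comm.1 hy

lemma enorm_lt_encRadius_subset {ψ : EReal → ℝ≥0∞} (hψ : Antitone ψ) (p : ES N → EReal)
    (t : ℝ≥0∞) :
    {x : ES N | ‖x‖ₑ < encRadius {y | t < ψ (p y)}} ⊆ {x | t < ψ (checkE p x)} := by
  intro x hx
  by_contra hcon
  rw [mem_ofPred_eq, not_lt] at hcon
  refine (hx.trans_le ((encRadius_mono fun y hy => ?_).trans
    (encRadius_lt_checkE_le p x))).ne rfl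
  by_contra hle
  exact (lt_of_lt_of_le hy (hψ (not_lt.1 hle))).not_ge hcon

lemma measurable_comp_checkE {ψ : EReal → ℝ≥0∞} (hψ : Antitone ψ) (p : ES N → EReal) :
    Measurable fun x => ψ (checkE p x) := by
  let M : ℝ≥0 → EReal := fun r => -sInf {ξ : EReal | encRadius {y | ξ < -p y} ≤ (r : ℝ≥0∞)}
  have hM : Monotone M := fun r r' hr =>
    EReal.neg_le_neg_iff.2 (sInf_le_sInf fun ξ hξ =>
      le_trans (b := (r : ℝ≥0∞)) hξ (ENNReal.coe_le_coe.2 hr))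
  exact (hψ.comp_monotone hM).measurable.comp measurable_nnnorm

lemma volume_enorm_lt (hN : 0 < N) {R : ℝ≥0∞} (hR : R ≠ ∞) :
    volume {z : ES N | ‖z‖ₑ < R} =
      ENNReal.ofReal (R.toReal ^ N) * volume (Metric.ball (0 : ES N) 1) := by
  have : Nonempty (Fin N) := ⟨⟨0, hN⟩⟩
  have : {z : ES N | ‖z‖ₑ < R} = Metric.ball 0 R.toReal := by
    ext z
    rw [mem_ball_zero_iff, mem_ofPred_eq, ← ofReal_norm,
      ENNReal.ofReal_lt_iff_lt_toReal (norm_nonneg z) hR]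
  rw [this, Measure.addHaar_ball _ _ ENNReal.toReal_nonneg, finrank_euclideanSpace_fin]

/-- The measure of a Minkowski sum is controlled by balls having the enclosing radii of the
summands. -/
lemma volume_add_le_encRadius (hN : 0 < N) (X Y : Set (ES N)) :
    volume (X + Y) ≤ 2 ^ (N - 1) *
      (volume {z : ES N | ‖z‖ₑ < encRadius X} + volume {z : ES N | ‖z‖ₑ < encRadius Y}) := by
  have : Nonempty (Fin N) := ⟨⟨0, hN⟩⟩
  by_cases hX : encRadius X = ∞
  · simp [hX, ENNReal.mul_top]
  by_cases hY : encRadius Y = ∞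
  · simp [hY, ENNReal.mul_top]
  obtain ⟨c, hc⟩ := exists_subset_closedBall_encRadius hX
  obtain ⟨d, hd⟩ := exists_subset_closedBall_encRadius hY
  rw [volume_enorm_lt hN hX, volume_enorm_lt hN hY]
  set r := (encRadius X).toReal
  set s := (encRadius Y).toReal
  have hr : 0 ≤ r := ENNReal.toReal_nonneg
  have hs : 0 ≤ s := ENNReal.toReal_nonneg
  have hsub : X + Y ⊆ Metric.closedBall (c + d) (r + s) := by
    rintro _ ⟨x, hx, y, hy, rfl⟩
    exact (dist_add_add_le x y c d).trans (add_le_add (hc hx) (hd hy))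
  calc volume (X + Y) ≤ volume (Metric.closedBall (c + d) (r + s)) := measure_mono hsub
    _ = ENNReal.ofReal ((r + s) ^ N) * volume (Metric.ball (0 : ES N) 1) := by
      rw [Measure.addHaar_closedBall _ _ (add_nonneg hr hs), finrank_euclideanSpace_fin]
    _ ≤ ENNReal.ofReal (2 ^ (N - 1) * (r ^ N + s ^ N)) * volume (Metric.ball (0 : ES N) 1) := by
      gcongr
      exact add_pow_le hr hs N
    _ = _ := by
      rw [ENNReal.ofReal_mul (by positivity), ENNReal.ofReal_add (by positivity) (by positivity),
        ENNReal.ofReal_pow (by norm_num), ENNReal.ofReal_ofNat]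
      ring

/-- Layer-cake representation of a truncated function. -/
lemma lintegral_min_eq_lintegral_meas_lt {α : Type*} [MeasurableSpace α] (μ : Measure α)
    {h : α → ℝ≥0∞} (hh : Measurable h) (n : ℕ) :
    ∫⁻ x, min (h x) n ∂μ =
      ∫⁻ t in Ioi (0 : ℝ), μ {x | ENNReal.ofReal t < min (h x) n} := by
  have hfin : ∀ x, min (h x) n ≠ ∞ := fun x =>
    ((min_le_right _ _).trans_lt (ENNReal.natCast_lt_top n)).ne
  have := lintegral_eq_lintegral_meas_lt μ (f := fun x => (min (h x) n).toReal)
    (Eventually.of_forall fun _ => ENNReal.toReal_nonneg)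
    (hh.min measurable_const).ennreal_toReal.aemeasurable
  simp only [ENNReal.ofReal_toReal (hfin _)] at this
  rw [this]
  refine setLIntegral_congr_fun measurableSet_Ioi fun t ht => ?_
  simp only [ENNReal.ofReal_lt_iff_lt_toReal (le_of_lt ht) (hfin _)]

lemma lintegral_le_of_meas_lt_le {α : Type*} [MeasurableSpace α] (μ : Measure α)
    {h u v : α → ℝ≥0∞} (hu : Measurable u) (hv : Measurable v) {K : ℝ≥0∞} (hK : K ≠ ∞)
    (hle : ∀ t : ℝ≥0∞, μ {x | t < h x} ≤ K * (μ {x | t < u x} + μ {x | t < v x})) :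
    ∫⁻ x, h x ∂μ ≤ K * (∫⁻ x, u x ∂μ + ∫⁻ x, v x ∂μ) := by
  obtain ⟨k, hk, hkh, hkeq⟩ := exists_measurable_le_lintegral_eq μ h
  have hsup : ∫⁻ x, k x ∂μ = ⨆ n : ℕ, ∫⁻ x, min (k x) n ∂μ := by
    rw [← lintegral_iSup (fun n => hk.min measurable_const)
      fun m n hmn x => min_le_min_left _ (by exact_mod_cast hmn)]
    refine lintegral_congr fun x => ?_
    rw [← inf_iSup_eq (k x), ENNReal.iSup_natCast, inf_top_eq]
  rw [hkeq, hsup]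
  refine iSup_le fun n => ?_
  calc ∫⁻ x, min (k x) n ∂μ
      = ∫⁻ t in Ioi (0 : ℝ), μ {x | ENNReal.ofReal t < min (k x) n} :=
        lintegral_min_eq_lintegral_meas_lt μ hk n
    _ ≤ ∫⁻ t in Ioi (0 : ℝ), K * (μ {x | ENNReal.ofReal t < min (u x) n} +
          μ {x | ENNReal.ofReal t < min (v x) n}) := by
      refine lintegral_mono fun t => ?_
      by_cases ht : ENNReal.ofReal t < n
      · simp only [lt_min_iff, ht, and_true]
        exact (measure_mono fun x hx => lt_of_lt_of_le hx (hkh x)).trans (hle _)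
      · simp [ht]
    _ = K * (∫⁻ x, min (u x) n ∂μ + ∫⁻ x, min (v x) n ∂μ) := by
      have hanti : Antitone fun t : ℝ => μ {x | ENNReal.ofReal t < min (u x) n} :=
        fun s t hst => measure_mono fun x hx =>
          lt_of_le_of_lt (ENNReal.ofReal_le_ofReal hst) hx
      rw [lintegral_const_mul' _ _ hK, lintegral_add_left hanti.measurable,
        lintegral_min_eq_lintegral_meas_lt μ hu, lintegral_min_eq_lintegral_meas_lt μ hv]
    _ ≤ K * (∫⁻ x, u x ∂μ + ∫⁻ x, v x ∂μ) := by
      gcongr <;> exact min_le_left _ _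

lemma toENN_eq_toENNReal (e : EReal) : toENN e = e.toENNReal := rfl

lemma eInv_anti : Antitone eInv := fun _ _ h =>
  ENNReal.inv_le_inv.2 (EReal.toENNReal_le_toENNReal h)

/-- The reciprocal turns an infimum of nonnegative values into a supremum, in the form of an
approximation property. -/
lemma exists_lt_mul_eInv_of_lt_iInf {ι : Type*} {w : ι → EReal} (hw : ∀ i, 0 ≤ w i)
    {c q : ℝ≥0∞} (h : c < q * eInv (⨅ i, w i)) : ∃ i, c < q * eInv (w i) := by
  by_contra! hcon
  refine h.not_ge ?_
  have hinf : toENN (⨅ i, w i) = ⨅ i, toENN (w i) := by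
    refine le_antisymm (le_iInf fun i => EReal.toENNReal_le_toENNReal (iInf_le _ i)) ?_
    have : ((⨅ i, toENN (w i) : ℝ≥0∞) : EReal) ≤ ⨅ i, w i := le_iInf fun i => by
      rw [← EReal.coe_toENNReal (hw i)]
      exact EReal.coe_ennreal_le_coe_ennreal_iff.2 (iInf_le _ i)
    simpa [toENN_eq_toENNReal] using EReal.toENNReal_le_toENNReal this
  rw [eInv, hinf, ENNReal.inv_iInf, ENNReal.mul_iSup]
  exact iSup_le hcon

lemma IsYoungFunction.exists_lt_of_lt {φ : ℝ≥0∞ → ℝ≥0∞} (hφ : IsYoungFunction φ) {t z : ℝ≥0∞}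
    (h : t < φ z) : ∃ c < z, t < φ c := by
  have hz : z ≠ 0 := by
    rintro rfl
    simp [hφ.map_zero] at h
  have : (nhdsWithin z (Iio z)).NeBot := nhdsLT_neBot_of_exists_lt ⟨0, pos_iff_ne_zero.2 hz⟩
  obtain ⟨c, hc, hcz⟩ :=
    (((hφ.left_continuous z).eventually (lt_mem_nhds h)).and self_mem_nhdsWithin).exists
  exact ⟨c, hcz, hc⟩

lemma IsYoungFunction.map_mul_le {φ : ℝ≥0∞ → ℝ≥0∞} (hφ : IsYoungFunction φ) {α : ℝ≥0∞}
    (hα : α ≤ 1) (x : ℝ≥0∞) : φ (α * x) ≤ α * φ x := by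
  simpa [hφ.map_zero] using hφ.convex (x := x) (y := 0) (add_tsub_cancel_of_le hα)

lemma half_eInv_le {e M : EReal} (h : e ≤ 2 * M) (s : ℝ≥0∞) :
    (2 * s)⁻¹ * eInv M ≤ s⁻¹ * eInv e := by
  have he : toENN e ≤ 2 * toENN M := by
    have := EReal.toENNReal_le_toENNReal h
    rwa [EReal.toENNReal_mul (by norm_num),
      show (2 : EReal).toENNReal = 2 by exact EReal.toENNReal_coe (x := 2)] at this
  have h2 : (2 : ℝ≥0∞)⁻¹ * eInv M ≤ eInv e := by
    rw [eInv, eInv, ← ENNReal.mul_inv (by simp) (by simp)]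
    exact ENNReal.inv_le_inv.2 he
  calc (2 * s)⁻¹ * eInv M = s⁻¹ * (2⁻¹ * eInv M) := by
        rw [ENNReal.mul_inv (by simp) (by simp)]; ring
    _ ≤ _ := by gcongr

lemma sub_half_sub_le_two_mul {p M : EReal} {a b : ℝ} (ha : 0 ≤ a) (hp : 0 ≤ p)
    (hpM : p ≤ M) (hb : 0 ≤ b) (hbM : (b : EReal) ≤ M) :
    p - (((a - b) / 2 : ℝ) : EReal) ≤ 2 * M := by
  have hM : 0 ≤ M := hp.trans hpM
  induction M with
  | bot => simp at hM
  | top => simp [EReal.mul_top_of_pos]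
  | coe M =>
    induction p with
    | bot => simp at hp
    | top => simp at hpM
    | coe p =>
      norm_cast at *
      rw [show (2 : EReal) = ((2 : ℝ) : EReal) from rfl, ← EReal.coe_mul, EReal.coe_le_coe_iff]
      linarith

/-- Level-set form of the inequality: superlevel sets of `φ ((2s)⁻¹ (f ⊻ g)⁻¹)` are controlled by
those of the two transformed functions. -/
lemma volume_lt_young_infMaxE_le (hN : 0 < N) {f g : ES N → EReal} (hg0 : ∀ x, 0 ≤ g x)
    {a b : ℝ} (ha : (⨅ x, max (f x) 0) = (a : EReal)) (hb : (⨅ x, g x) = (b : EReal))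
    {φ : ℝ≥0∞ → ℝ≥0∞} (hφ : IsYoungFunction φ) (s t : ℝ≥0∞) :
    volume {x | t < φ ((2 * s)⁻¹ * eInv (infMaxE f g x))} ≤ 2 ^ (N - 1) *
      (volume {x | t < φ (s⁻¹ *
          eInv (checkE (fun y => max (f y) 0) x - (((a - b) / 2 : ℝ) : EReal)))} +
        volume {x | t < φ (s⁻¹ * eInv (checkE g x + (((a - b) / 2 : ℝ) : EReal)))}) := by
  have ha0 : 0 ≤ a := by
    have : (0 : EReal) ≤ a := ha ▸ le_iInf fun x => le_max_right _ _
    exact_mod_cast this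
  have hb0 : 0 ≤ b := by
    have : (0 : EReal) ≤ b := hb ▸ le_iInf hg0
    exact_mod_cast this
  have haf : ∀ x, (a : EReal) ≤ max (f x) 0 := fun x => ha ▸ iInf_le _ x
  have hbg : ∀ x, (b : EReal) ≤ g x := fun x => hb ▸ iInf_le _ x
  let ψ₁ : EReal → ℝ≥0∞ := fun e => φ (s⁻¹ * eInv (e - (((a - b) / 2 : ℝ) : EReal)))
  let ψ₂ : EReal → ℝ≥0∞ := fun e => φ (s⁻¹ * eInv (e + (((a - b) / 2 : ℝ) : EReal)))
  have hψ₁ : Antitone ψ₁ := fun e e' h =>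
    hφ.mono (mul_le_mul_right (eInv_anti (EReal.sub_le_sub h le_rfl)) _)
  have hψ₂ : Antitone ψ₂ := fun e e' h =>
    hφ.mono (mul_le_mul_right (eInv_anti (add_le_add h le_rfl)) _)
  have hsub : {x | t < φ ((2 * s)⁻¹ * eInv (infMaxE f g x))} ⊆
      {y | t < ψ₁ (max (f y) 0)} + {y | t < ψ₂ (g y)} := by
    intro x hx
    obtain ⟨c, hc, htc⟩ := hφ.exists_lt_of_lt hx
    obtain ⟨y, hy⟩ := exists_lt_mul_eInv_of_lt_iInf
      (fun y => (hg0 y).trans (le_max_right (f (x - y)) _)) hc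
    have hM : 0 ≤ max (f (x - y)) (g y) := (hg0 y).trans (le_max_right _ _)
    have hfM : max (f (x - y)) 0 ≤ max (f (x - y)) (g y) := max_le (le_max_left _ _) hM
    refine ⟨x - y, ?_, y, ?_, sub_add_cancel x y⟩
    · exact htc.trans_le (hφ.mono (hy.le.trans (half_eInv_le
        (sub_half_sub_le_two_mul ha0 (le_max_right _ _) hfM hb0
          ((hbg y).trans (le_max_right _ _))) s)))
    · refine htc.trans_le (hφ.mono (hy.le.trans (half_eInv_le ?_ s)))
      have := sub_half_sub_le_two_mul hb0 (hg0 y) (le_max_right (f (x - y)) _) ha0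
        ((haf (x - y)).trans hfM)
      rwa [sub_eq_add_neg, ← EReal.coe_neg, show -((b - a) / 2) = (a - b) / 2 by ring] at this
  refine (measure_mono hsub).trans ((volume_add_le_encRadius hN _ _).trans ?_)
  exact mul_le_mul_right (add_le_add (measure_mono (enorm_lt_encRadius_subset hψ₁ _ t))
    (measure_mono (enorm_lt_encRadius_subset hψ₂ _ t))) _

lemma le_mul_luxNorm_add {φ : ℝ≥0∞ → ℝ≥0∞} {u v : ES N → ℝ≥0∞} {L K : ℝ≥0∞}
    (hK0 : K ≠ 0) (hK : K ≠ ∞)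
    (h : ∀ r s : ℝ≥0∞, 0 < r → r ≠ ∞ → 0 < s → s ≠ ∞ → ∫⁻ x, φ (r⁻¹ * u x) ≤ 1 →
      ∫⁻ x, φ (s⁻¹ * v x) ≤ 1 → L ≤ K * (r + s)) :
    L ≤ K * (luxNorm φ u + luxNorm φ v) := by
  rw [mul_comm, ← ENNReal.div_le_iff hK0 hK, ← tsub_le_iff_left]
  refine le_sInf fun s hs => ?_
  rw [tsub_le_iff_right, add_comm, ← tsub_le_iff_right]
  refine le_sInf fun r hr => ?_
  rw [tsub_le_iff_right, ENNReal.div_le_iff hK0 hK, mul_comm]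
  by_cases hr' : r = ∞
  · simp [hr', ENNReal.mul_top hK0]
  by_cases hs' : s = ∞
  · simp [hs', ENNReal.mul_top hK0]
  exact h r s hr.1 hr' hs.1 hs' hr.2 hs.2

lemma IsYoungFunction.lintegral_scale_le {φ : ℝ≥0∞ → ℝ≥0∞} (hφ : IsYoungFunction φ)
    {u : ES N → ℝ≥0∞} {r s : ℝ≥0∞} (hr0 : r ≠ 0) (hr : r ≠ ∞) (hrs : r ≤ s)
    (h : ∫⁻ x, φ (r⁻¹ * u x) ≤ 1) : ∫⁻ x, φ (s⁻¹ * u x) ≤ r / s := by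
  have hα : r / s ≤ 1 := ENNReal.div_le_of_le_mul (by simpa using hrs)
  calc ∫⁻ x, φ (s⁻¹ * u x) ≤ ∫⁻ x, r / s * φ (r⁻¹ * u x) := by
        refine lintegral_mono fun x => ?_
        refine le_trans (le_of_eq ?_) (hφ.map_mul_le hα (r⁻¹ * u x))
        rw [div_eq_mul_inv, mul_comm r, mul_assoc, ← mul_assoc r,
          ENNReal.mul_inv_cancel hr0 hr, one_mul]
    _ = r / s * ∫⁻ x, φ (r⁻¹ * u x) :=
        lintegral_const_mul' _ _ (hα.trans_lt ENNReal.one_lt_top).ne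
    _ ≤ r / s * 1 := by gcongr
    _ = r / s := mul_one _

theorem luxNorm_inv_infMax_le {N : ℕ} (hN : 0 < N)
    (f g : ES N → EReal) (hf : Measurable f) (hg : Measurable g)
    (hg0 : ∀ x, 0 ≤ g x) (hfne : ∃ x, f x ≠ ⊤) (hgne : ∃ x, g x ≠ ⊤)
    (a b : ℝ) (ha : (⨅ x, max (f x) 0) = (a : EReal)) (hb : (⨅ x, g x) = (b : EReal)) :
    (∀ x, 0 ≤ infMaxE f g x) ∧
    ∀ φ : ℝ≥0∞ → ℝ≥0∞, IsYoungFunction φ →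
      luxNorm φ (fun x => eInv (infMaxE f g x)) ≤
        2 ^ N *
          (luxNorm φ (fun x => eInv (checkE (fun y => max (f y) 0) x - (((a - b) / 2 : ℝ) : EReal))) +
            luxNorm φ (fun x => eInv (checkE g x + (((a - b) / 2 : ℝ) : EReal)))) := by
  refine ⟨fun x => le_iInf fun y => (hg0 y).trans (le_max_right _ _), fun φ hφ => ?_⟩
  refine le_mul_luxNorm_add (by positivity) (by finiteness) fun r₁ r₂ h₁ h₁' h₂ h₂' hu hv => ?_
  set s : ℝ≥0∞ := 2 ^ (N - 1) * (r₁ + r₂) with hs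
  have hs0 : s ≠ 0 := mul_ne_zero (by positivity) (by positivity)
  have hs' : s ≠ ∞ := by finiteness
  have hle : r₁ + r₂ ≤ s := le_mul_of_one_le_left' (one_le_pow₀ (by norm_num))
  have hr : 2 ^ N * (r₁ + r₂) = 2 * s := by
    rw [hs, ← mul_assoc, ← pow_succ', Nat.sub_add_cancel hN]
  rw [hr]
  refine sInf_le ⟨by positivity, ?_⟩
  refine (lintegral_le_of_meas_lt_le volume
    (measurable_comp_checkE (ψ := fun e => φ (s⁻¹ * eInv (e - (((a - b) / 2 : ℝ) : EReal))))
      (fun e e' h => hφ.mono (mul_le_mul_right (eInv_anti (EReal.sub_le_sub h le_rfl)) _)) _)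
    (measurable_comp_checkE (ψ := fun e => φ (s⁻¹ * eInv (e + (((a - b) / 2 : ℝ) : EReal))))
      (fun e e' h => hφ.mono (mul_le_mul_right (eInv_anti (add_le_add h le_rfl)) _)) _)
    (K := 2 ^ (N - 1)) (by finiteness)
    (volume_lt_young_infMaxE_le hN hg0 ha hb hφ s)).trans ?_
  calc _ ≤ 2 ^ (N - 1) * (r₁ / s + r₂ / s) := by
        gcongr
        · exact hφ.lintegral_scale_le h₁.ne' h₁' (le_self_add.trans hle) hu
        · exact hφ.lintegral_scale_le h₂.ne' h₂' (le_add_self.trans hle) hv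
    _ = 1 := by
        rw [← ENNReal.add_div, ← mul_div_assoc, ← hs, ENNReal.div_self hs0 hs']

end
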